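/- A finite tree Γ has index r < 2 if and only if Γ is isomorphic to one of the Dynkin diagrams A_n (n ≥ 1), D_n (n ≥ 4), E_6, E_7, E_8. -/

import Mathlib

/-- `μ` is an eigenvalue of the real matrix `A`. -/
def IsEigen {n : Type*} [Fintype n] (A : Matrix n n ℝ) (μ : ℝ) : Prop :=
  ∃ v : n → ℝ, v ≠ 0 ∧ A.mulVec v = μ • v

/-- The Dynkin diagram Aₙ: the path on n vertices. -/
def AGraph (n : ℕ) : SimpleGraph (Fin n) :=
  SimpleGraph.fromRel fun i j => (i : ℕ) + 1 = (j : ℕ)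

/-- The Dynkin diagram Dₙ (n ≥ 4): the path 0 − 1 − ⋯ − (n−2) with an extra leaf n−1
attached to the second vertex 1. -/
def DGraph (n : ℕ) : SimpleGraph (Fin n) :=
  SimpleGraph.fromRel fun i j =>
    ((i : ℕ) + 1 = (j : ℕ) ∧ (j : ℕ) ≤ n - 2) ∨ ((i : ℕ) = 1 ∧ (j : ℕ) = n - 1)

/-- The Dynkin diagram E₆: path 0 − ⋯ − 4 with leaf 5 attached to the middle vertex 2. -/
def E6Graph : SimpleGraph (Fin 6) :=
  SimpleGraph.fromRel fun i j =>
    ((i : ℕ) + 1 = (j : ℕ) ∧ (j : ℕ) ≤ 4) ∨ ((i : ℕ) = 2 ∧ (j : ℕ) = 5)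

/-- The Dynkin diagram E₇: path 0 − ⋯ − 5 with leaf 6 attached to vertex 2. -/
def E7Graph : SimpleGraph (Fin 7) :=
  SimpleGraph.fromRel fun i j =>
    ((i : ℕ) + 1 = (j : ℕ) ∧ (j : ℕ) ≤ 5) ∨ ((i : ℕ) = 2 ∧ (j : ℕ) = 6)

/-- The Dynkin diagram E₈: path 0 − ⋯ − 6 with leaf 7 attached to vertex 2. -/
def E8Graph : SimpleGraph (Fin 8) :=
  SimpleGraph.fromRel fun i j =>
    ((i : ℕ) + 1 = (j : ℕ) ∧ (j : ℕ) ≤ 6) ∨ ((i : ℕ) = 2 ∧ (j : ℕ) = 7)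

/-!
The index is less than `2` exactly when the Cartan matrix `C = 2 - A`, with `A` the adjacency
matrix, is positive definite, and this property passes to induced subgraphs. A single test vector
`x` decides it: if `x ≥ 0` is nonzero and `C x ≤ 0`, then `C` is not positive definite; if `x > 0`
on a connected graph and `0 ≤ C x ≠ 0`, then it is, because the quadratic form at `x * u` is a
nonnegative combination of the squares of `u` and of the squares of its differences along edges.

Linear functions along a path are annihilated by `C` away from their kinks. For the path on `n`
vertices with a leaf attached to its vertex `k`, the tent function with apex `k` shows that `C` is
positive definite if and only if `1 / 2 < 1 / (k + 1) + 1 / (n - k)`, which leaves only `D` and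
`E`. A tree grows by attaching leaves, and attaching one to a path or to such a branched path
gives again a graph of this kind or one on which some piecewise linear `x` has `C x ≤ 0`.
-/

open Matrix

/-! ### Positive definiteness via test vectors -/

section Matrix

variable {n : Type*} [Fintype n]

theorem posDef_smul_one_sub_iff_forall_isEigen_lt [DecidableEq n] {A : Matrix n n ℝ}
    (hA : A.IsHermitian) (c : ℝ) :
    (c • 1 - A).PosDef ↔ ∀ μ, IsEigen A μ → μ < c := by
  have mulVec_eq (v : n → ℝ) : (c • 1 - A) *ᵥ v = c • v - A *ᵥ v := by
    rw [sub_mulVec, smul_mulVec, one_mulVec]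
  constructor
  · rintro h μ ⟨v, hv, hAv⟩
    have hpos := h.dotProduct_mulVec_pos hv
    rw [mulVec_eq, hAv, ← sub_smul, dotProduct_smul, smul_eq_mul] at hpos
    exact sub_pos.1 (pos_of_mul_pos_left hpos (dotProduct_star_self_nonneg v))
  · intro h
    have hH : (c • 1 - A).IsHermitian := (isHermitian_one.smul (IsSelfAdjoint.all c)).sub hA
    refine hH.posDef_iff_eigenvalues_pos.2 fun i => ?_
    suffices IsEigen A (c - hH.eigenvalues i) by linarith [h _ this]
    refine ⟨(hH.eigenvectorBasis i).ofLp, ?_, ?_⟩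
    · exact (WithLp.ofLp_eq_zero 2).not.2 (hH.eigenvectorBasis.orthonormal.ne_zero i)
    · rw [sub_smul, ← hH.mulVec_eigenvectorBasis i, mulVec_eq, sub_sub_cancel]

theorem not_posDef_of_mulVec_nonpos {M : Matrix n n ℝ} {x : n → ℝ} (hx : 0 ≤ x) (hx0 : x ≠ 0)
    (hM : M *ᵥ x ≤ 0) : ¬ M.PosDef := fun h =>
  (h.dotProduct_mulVec_pos hx0).not_ge <|
    Finset.sum_nonpos fun i _ => mul_nonpos_of_nonneg_of_nonpos (hx i) (hM i)

theorem dotProduct_mulVec_mul_eq_sub_sum_sq {M : Matrix n n ℝ} (hM : M.IsSymm) (x u : n → ℝ) :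
    (x * u) ⬝ᵥ M *ᵥ (x * u) = (x * u ^ 2) ⬝ᵥ M *ᵥ x -
      (∑ i, ∑ j, M i j * x i * x j * (u i - u j) ^ 2) / 2 := by
  have hcross : (x * u) ⬝ᵥ M *ᵥ (x * u) = ∑ i, ∑ j, M i j * x i * x j * (u i * u j) := by
    simp only [dotProduct, mulVec, Finset.mul_sum, Pi.mul_apply]
    exact Finset.sum_congr rfl fun i _ => Finset.sum_congr rfl fun j _ => by ring
  have hsq : (x * u ^ 2) ⬝ᵥ M *ᵥ x = ∑ i, ∑ j, M i j * x i * x j * u i ^ 2 := by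
    simp only [dotProduct, mulVec, Finset.mul_sum, Pi.mul_apply, Pi.pow_apply]
    exact Finset.sum_congr rfl fun i _ => Finset.sum_congr rfl fun j _ => by ring
  have hswap : (x * u ^ 2) ⬝ᵥ M *ᵥ x = ∑ i, ∑ j, M i j * x i * x j * u j ^ 2 := by
    rw [hsq, Finset.sum_comm]
    refine Finset.sum_congr rfl fun i _ => Finset.sum_congr rfl fun j _ => ?_
    rw [hM.apply i j]; ring
  have hexpand : ∑ i, ∑ j, M i j * x i * x j * (u i - u j) ^ 2 =
      (x * u ^ 2) ⬝ᵥ M *ᵥ x + (x * u ^ 2) ⬝ᵥ M *ᵥ x - 2 * (x * u) ⬝ᵥ M *ᵥ (x * u) := by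
    nth_rw 1 [hsq]
    rw [hswap, hcross]
    simp only [Finset.mul_sum, ← Finset.sum_add_distrib, ← Finset.sum_sub_distrib]
    exact Finset.sum_congr rfl fun i _ => Finset.sum_congr rfl fun j _ => by ring
  rw [hexpand]; ring

end Matrix

/-! ### Attaching a leaf -/

/-- The graph obtained from `H` by attaching a new leaf, the vertex `none`, to the vertex `w`. -/
def addLeaf {V : Type*} (H : SimpleGraph V) (w : V) : SimpleGraph (Option V) where
  Adj
    | none, none => False
    | none, some b => b = w
    | some a, none => a = w
    | some a, some b => H.Adj a b
  symm := ⟨by rintro (_ | a) (_ | b) h <;> first | exact h | exact H.adj_symm h⟩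
  loopless := ⟨by rintro (_ | a) h <;> first | exact h | exact H.loopless.irrefl _ h⟩

namespace addLeaf

variable {V W : Type*} {H : SimpleGraph V} {H' : SimpleGraph W} {w : V} {w' : W}

@[simp] theorem not_adj_none_none : ¬ (addLeaf H w).Adj none none := id
@[simp] theorem adj_none_some {a : V} : (addLeaf H w).Adj none (some a) ↔ a = w := Iff.rfl
@[simp] theorem adj_some_none {a : V} : (addLeaf H w).Adj (some a) none ↔ a = w := Iff.rfl
@[simp] theorem adj_some_some {a b : V} : (addLeaf H w).Adj (some a) (some b) ↔ H.Adj a b :=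
  Iff.rfl

instance [DecidableEq V] [DecidableRel H.Adj] : DecidableRel (addLeaf H w).Adj
  | none, none => inferInstanceAs (Decidable False)
  | none, some b => inferInstanceAs (Decidable (b = w))
  | some a, none => inferInstanceAs (Decidable (a = w))
  | some a, some b => inferInstanceAs (Decidable (H.Adj a b))

def iso {G : SimpleGraph W} (e : Option V ≃ W)
    (hsome : ∀ a b, G.Adj (e (some a)) (e (some b)) ↔ H.Adj a b)
    (hnone : ∀ a, G.Adj (e none) (e (some a)) ↔ a = w) : addLeaf H w ≃g G where
  toEquiv := e
  map_rel_iff' := by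
    rintro (_ | a) (_ | b)
    · simp
    · simp [hnone]
    · simp [G.adj_comm (e (some a)), hnone]
    · exact hsome a b

def embedding : H ↪g addLeaf H w where
  toEmbedding := .some
  map_rel_iff' := Iff.rfl

theorem connected (hH : H.Connected) : (addLeaf H w).Connected := by
  have hleaf : (addLeaf H w).Reachable none (some w) := SimpleGraph.Adj.reachable rfl
  have hsome (a : V) : (addLeaf H w).Reachable (some w) (some a) :=
    (hH w a).map (⟨some, id⟩ : H →g addLeaf H w)
  refine (SimpleGraph.connected_iff_exists_forall_reachable _).2 ⟨some w, ?_⟩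
  rintro (_ | a)
  exacts [hleaf.symm, hsome a]

def congr (e : H ≃g H') (h : e w = w') : addLeaf H w ≃g addLeaf H' w' :=
  iso (Equiv.optionCongr e.toEquiv) (fun _ _ => e.map_adj_iff) fun _ => by simp [← h]

def swap (H : SimpleGraph V) (a b : V) :
    addLeaf (addLeaf H a) (some b) ≃g addLeaf (addLeaf H b) (some a) where
  toFun
    | none => some none
    | some none => none
    | some (some v) => some (some v)
  invFun
    | none => some none
    | some none => none
    | some (some v) => some (some v)
  left_inv := by rintro (_ | _ | v) <;> rfl
  right_inv := by rintro (_ | _ | v) <;> rfl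
  map_rel_iff' := by rintro (_ | _ | u) (_ | _ | v) <;> simp

end addLeaf

/-- The automorphism exchanging two vertices with the same neighbours. -/
def twinSwapIso {V : Type*} [DecidableEq V] {G : SimpleGraph V} {a b : V}
    (h : ∀ v, G.Adj a v ↔ G.Adj b v) : G ≃g G where
  toEquiv := Equiv.swap a b
  map_rel_iff' := by
    intro u v
    simp only [Equiv.swap_apply_def]
    grind [G.adj_comm]

/-! ### The Cartan matrix of a graph -/

theorem apply_eq_of_forall_adj_apply_eq {V β : Type*} {G : SimpleGraph V} (hG : G.Connected)
    {u : V → β} (hu : ∀ v w, G.Adj v w → u v = u w) (v w : V) : u v = u w := by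
  obtain ⟨p⟩ := hG v w
  induction p with
  | nil => rfl
  | cons hadj _ ih => exact (hu _ _ hadj).trans ih

section CartanMatrix

variable {V W : Type*} [DecidableEq V] [DecidableEq W]

/-- The generalised Cartan matrix `2 - A` of a graph with adjacency matrix `A`. Smallness of the
index is handled as positive definiteness of this matrix, which passes to induced subgraphs. -/
def cartanMatrix (G : SimpleGraph V) [DecidableRel G.Adj] : Matrix V V ℝ :=
  (2 : ℝ) • 1 - G.adjMatrix ℝ

variable {G : SimpleGraph V} [DecidableRel G.Adj] {H : SimpleGraph W} [DecidableRel H.Adj]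

theorem cartanMatrix_isSymm : (cartanMatrix G).IsSymm := by
  simp [cartanMatrix, IsSymm, G.isSymm_adjMatrix.eq]

theorem cartanMatrix_apply_of_ne {v w : V} (h : v ≠ w) :
    cartanMatrix G v w = if G.Adj v w then -1 else 0 := by
  by_cases hvw : G.Adj v w <;> simp [cartanMatrix, h, hvw]

theorem cartanMatrix_submatrix (f : H ↪g G) :
    (cartanMatrix G).submatrix f f = cartanMatrix H := by
  ext a b
  simp [cartanMatrix, one_apply]

theorem posDef_cartanMatrix_of_embedding (f : H ↪g G) (hG : (cartanMatrix G).PosDef) :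
    (cartanMatrix H).PosDef :=
  cartanMatrix_submatrix f ▸ hG.submatrix f.injective

variable [Fintype V]

theorem cartanMatrix_mulVec_apply (x : V → ℝ) (v : V) :
    (cartanMatrix G *ᵥ x) v = 2 * x v - ∑ w, if G.Adj v w then x w else 0 := by
  simp [cartanMatrix, sub_mulVec, smul_mulVec, SimpleGraph.adjMatrix_mulVec_apply,
    SimpleGraph.neighborFinset_eq_filter, Finset.sum_filter]

theorem posDef_cartanMatrix_iff_lt_two {r : ℝ}
    (hr : IsEigen (G.adjMatrix ℝ) r ∧ ∀ μ, IsEigen (G.adjMatrix ℝ) μ → μ ≤ r) :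
    (cartanMatrix G).PosDef ↔ r < 2 := by
  rw [cartanMatrix, posDef_smul_one_sub_iff_forall_isEigen_lt (G.isHermitian_adjMatrix ℝ)]
  exact ⟨fun h => h r hr.1, fun h μ hμ => (hr.2 μ hμ).trans_lt h⟩

theorem dotProduct_cartanMatrix_mulVec_mul (x u : V → ℝ) :
    (x * u) ⬝ᵥ cartanMatrix G *ᵥ (x * u) = (x * u ^ 2) ⬝ᵥ cartanMatrix G *ᵥ x +
      (∑ v, ∑ w, if G.Adj v w then x v * x w * (u v - u w) ^ 2 else 0) / 2 := by
  rw [dotProduct_mulVec_mul_eq_sub_sum_sq cartanMatrix_isSymm, sub_eq_add_neg, ← neg_div]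
  simp only [← Finset.sum_neg_distrib]
  congr 2
  refine Finset.sum_congr rfl fun v _ => Finset.sum_congr rfl fun w _ => ?_
  obtain rfl | hvw := eq_or_ne v w
  · simp
  · rw [cartanMatrix_apply_of_ne hvw]
    split_ifs <;> ring

theorem posDef_cartanMatrix_of_superharmonic (hG : G.Connected) {x : V → ℝ} (hx : ∀ v, 0 < x v)
    (h : 0 ≤ cartanMatrix G *ᵥ x) (h0 : cartanMatrix G *ᵥ x ≠ 0) : (cartanMatrix G).PosDef := by
  refine PosDef.of_dotProduct_mulVec_pos cartanMatrix_isSymm fun y hy => ?_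
  obtain ⟨u, rfl⟩ : ∃ u, y = x * u := ⟨y / x, funext fun v => (mul_div_cancel₀ _ (hx v).ne').symm⟩
  have hvertex (v : V) : 0 ≤ (x * u ^ 2) v * (cartanMatrix G *ᵥ x) v :=
    mul_nonneg (mul_nonneg (hx v).le (sq_nonneg _)) (h v)
  have hedge (v w : V) : 0 ≤ if G.Adj v w then x v * x w * (u v - u w) ^ 2 else 0 := by
    have := hx v
    have := hx w
    split_ifs <;> positivity
  have hedges (v : V) := Finset.sum_nonneg fun w (_ : w ∈ Finset.univ) => hedge v w
  have hvertexSum : 0 ≤ (x * u ^ 2) ⬝ᵥ cartanMatrix G *ᵥ x := Finset.sum_nonneg fun v _ => hvertex v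
  have hedgeSum := div_nonneg (Finset.sum_nonneg fun v (_ : v ∈ Finset.univ) => hedges v)
    (zero_le_two (α := ℝ))
  rw [star_trivial, dotProduct_cartanMatrix_mulVec_mul]
  refine (add_nonneg hvertexSum hedgeSum).lt_of_ne' fun hzero => hy ?_
  obtain ⟨hvertex0, hedge0⟩ :=
    (add_eq_zero_iff_of_nonneg hvertexSum hedgeSum).1 hzero
  have hconst : ∀ v w, u v = u w := by
    refine apply_eq_of_forall_adj_apply_eq hG fun v w hvw => ?_
    have hrow := (Finset.sum_eq_zero_iff_of_nonneg fun v _ => hedges v).1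
      (div_eq_zero_iff.1 hedge0 |>.resolve_right two_ne_zero) v (Finset.mem_univ v)
    have hterm := (Finset.sum_eq_zero_iff_of_nonneg fun w _ => hedge v w).1 hrow w
      (Finset.mem_univ w)
    simpa [hvw, (hx v).ne', (hx w).ne', sub_eq_zero] using hterm
  obtain ⟨v, hv⟩ := Function.ne_iff.1 h0
  have hterm := (Finset.sum_eq_zero_iff_of_nonneg fun v _ => hvertex v).1 hvertex0 v
    (Finset.mem_univ v)
  have huv : u v = 0 := by
    simpa [(hx v).ne', show (cartanMatrix G *ᵥ x) v ≠ 0 from hv] using hterm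
  exact funext fun w => by simp [hconst w v, huv]

end CartanMatrix

section AddLeafCartan

variable {V : Type*} [Fintype V] [DecidableEq V] {H : SimpleGraph V} [DecidableRel H.Adj] {w : V}

theorem cartanMatrix_addLeaf_mulVec_none (x : Option V → ℝ) :
    (cartanMatrix (addLeaf H w) *ᵥ x) none = 2 * x none - x (some w) := by
  simp [cartanMatrix_mulVec_apply]

theorem cartanMatrix_addLeaf_mulVec_some (x : Option V → ℝ) (v : V) :
    (cartanMatrix (addLeaf H w) *ᵥ x) (some v) =
      (cartanMatrix H *ᵥ (x ∘ some)) v - if v = w then x none else 0 := by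
  simp only [cartanMatrix_mulVec_apply, Fintype.sum_option, addLeaf.adj_some_none,
    addLeaf.adj_some_some, Function.comp_apply]
  ring

end AddLeafCartan

/-! ### Paths -/

@[simp] theorem AGraph.adj_iff {n : ℕ} {i j : Fin n} :
    (AGraph n).Adj i j ↔ (i : ℕ) + 1 = j ∨ (j : ℕ) + 1 = i := by
  simp only [AGraph, SimpleGraph.fromRel_adj, ne_eq, Fin.ext_iff]
  omega

instance (n : ℕ) : DecidableRel (AGraph n).Adj := fun _ _ =>
  decidable_of_iff _ AGraph.adj_iff.symm

theorem AGraph.connected {n : ℕ} (hn : 1 ≤ n) : (AGraph n).Connected := by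
  obtain ⟨m, rfl⟩ := Nat.exists_eq_add_of_le' hn
  convert SimpleGraph.pathGraph_connected m using 1
  ext i j
  rw [AGraph.adj_iff, SimpleGraph.pathGraph_adj]

def AGraph.rev (n : ℕ) : AGraph n ≃g AGraph n where
  toEquiv := Fin.revPerm
  map_rel_iff' := by
    intro i j
    simp only [Fin.revPerm_apply, AGraph.adj_iff, Fin.val_rev]
    omega

def AGraph.addLeafFirst {n : ℕ} {k : Fin n} (hk : (k : ℕ) = 0) :
    addLeaf (AGraph n) k ≃g AGraph (n + 1) :=
  addLeaf.iso (finSuccEquiv n).symm (by simp) (by simp [Fin.ext_iff, hk, eq_comm])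

def AGraph.addLeafLast {n : ℕ} {k : Fin n} (hk : (k : ℕ) + 1 = n) :
    addLeaf (AGraph n) k ≃g AGraph (n + 1) :=
  addLeaf.iso finSuccEquivLast.symm (by simp) fun i => by
    simp only [finSuccEquivLast_symm_none, finSuccEquivLast_symm_some, AGraph.adj_iff, Fin.val_last,
      Fin.val_castSucc, Fin.ext_iff]
    omega

theorem cartanMatrix_AGraph_mulVec {n : ℕ} {g : ℤ → ℝ} (h0 : g (-1) = 0) (hn : g n = 0)
    (i : Fin n) :
    (cartanMatrix (AGraph n) *ᵥ fun j => g j) i = 2 * g i - g (i - 1) - g (i + 1) := by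
  have hsplit (j : Fin n) : (if (AGraph n).Adj i j then g j else 0) =
      (if (i : ℕ) + 1 = j then g (i + 1) else 0) + if (j : ℕ) + 1 = i then g (i - 1) else 0 := by
    simp only [AGraph.adj_iff]
    grind
  have hnext : (∑ j : Fin n, if (i : ℕ) + 1 = j then g (i + 1) else 0) = g (i + 1) := by
    rw [Fin.sum_univ_eq_sum_range (fun j => if (i : ℕ) + 1 = j then g (i + 1) else 0),
      Finset.sum_ite_eq]
    grind
  have hprev : (∑ j : Fin n, if (j : ℕ) + 1 = i then g (i - 1) else 0) = g (i - 1) := by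
    rw [Fin.sum_univ_eq_sum_range (fun j => if j + 1 = (i : ℕ) then g (i - 1) else 0)]
    rcases hi : (i : ℕ) with _ | k
    · simp [h0]
    · simp only [Nat.add_right_cancel_iff, Finset.sum_ite_eq', Finset.mem_range]
      grind
  rw [cartanMatrix_mulVec_apply, Finset.sum_congr rfl fun j _ => hsplit j, Finset.sum_add_distrib,
    hnext, hprev]
  ring

/-- The function of `t` that is linear from `0` at `-1` to `1` at `a`, equal to `1` from `a` to `b`
and linear from `1` at `b` to `0` at `n`, as a sum of two functions with a single kink. -/
noncomputable def trapezoid (n a b t : ℤ) : ℝ :=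
  (min t a + 1 : ℤ) / (a + 1 : ℤ) - (max (t - b) 0 : ℤ) / (n - b : ℤ)

theorem trapezoid_neg_one {n a b : ℤ} (ha : 0 ≤ a) (hb : 0 ≤ b) : trapezoid n a b (-1) = 0 := by
  rw [trapezoid, min_eq_left (by omega), max_eq_right (by omega)]
  simp

theorem trapezoid_right {n a b : ℤ} (ha : 0 ≤ a) (han : a ≤ n) (hbn : b < n) :
    trapezoid n a b n = 0 := by
  rw [trapezoid, min_eq_right han, max_eq_left (by omega), div_self, div_self, sub_self] <;>
    exact_mod_cast (by omega)

theorem trapezoid_of_mem_Icc {n a b t : ℤ} (ha : 0 ≤ a) (hat : a ≤ t) (htb : t ≤ b) :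
    trapezoid n a b t = 1 := by
  rw [trapezoid, min_eq_right hat, max_eq_right (by omega), div_self, Int.cast_zero, zero_div,
    sub_zero]
  exact_mod_cast (by omega)

theorem trapezoid_pos {n a b t : ℤ} (ha : 0 ≤ a) (hab : a ≤ b) (ht : 0 ≤ t) (htn : t < n) :
    0 < trapezoid n a b t := by
  unfold trapezoid
  rcases le_total t b with htb | hbt
  · rw [max_eq_right (by omega), Int.cast_zero, zero_div, sub_zero]
    exact div_pos (by exact_mod_cast (by omega)) (by exact_mod_cast (by omega))
  · rw [min_eq_right (by omega), max_eq_left (by omega), div_self (by exact_mod_cast (by omega)),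
      sub_pos, div_lt_one (by exact_mod_cast (by omega))]
    exact_mod_cast (by omega)

theorem trapezoid_second_difference (n a b t : ℤ) :
    2 * trapezoid n a b t - trapezoid n a b (t - 1) - trapezoid n a b (t + 1) =
      (if t = a then (a + 1 : ℝ)⁻¹ else 0) + if t = b then (n - b : ℝ)⁻¹ else 0 := by
  have hmin : 2 * min t a - min (t - 1) a - min (t + 1) a = if t = a then 1 else 0 := by grind
  have hmax : 2 * max (t - b) 0 - max (t - 1 - b) 0 - max (t + 1 - b) 0 =
      if t = b then -1 else 0 := by grind
  have hmin' := congrArg (Int.cast : ℤ → ℝ) hmin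
  have hmax' := congrArg (Int.cast : ℤ → ℝ) hmax
  unfold trapezoid
  push_cast at hmin' hmax' ⊢
  split_ifs at * <;> linear_combination hmin' / (a + 1) - hmax' / (n - b)

theorem cartanMatrix_AGraph_mulVec_trapezoid {n : ℕ} (a b : Fin n) :
    (cartanMatrix (AGraph n) *ᵥ fun i => trapezoid n a b i) =
      Pi.single a ((a + 1 : ℝ)⁻¹) + Pi.single b ((n - b : ℝ)⁻¹) := by
  ext i
  rw [cartanMatrix_AGraph_mulVec (trapezoid_neg_one (by omega) (by omega))
    (trapezoid_right (by omega) (by omega) (by omega)), trapezoid_second_difference]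
  simp [Pi.single_apply, Fin.ext_iff]

/-- The path on `n` vertices with an extra leaf attached to its vertex `k`. It is the star-shaped
tree whose three legs, counted with their common vertex `k`, have `2`, `k + 1` and `n - k`
vertices. -/
abbrev branchedPath (n : ℕ) (k : Fin n) : SimpleGraph (Option (Fin n)) :=
  addLeaf (AGraph n) k

theorem cartanMatrix_branchedPath_mulVec {n : ℕ} (k : Fin n) :
    (cartanMatrix (branchedPath n k) *ᵥ fun o => o.elim (2⁻¹) fun i => trapezoid n k k i) =
      Pi.single (some k) ((k + 1 : ℝ)⁻¹ + (n - k : ℝ)⁻¹ - 2⁻¹) := by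
  ext (_ | i)
  · simp [cartanMatrix_addLeaf_mulVec_none, trapezoid_of_mem_Icc]
  · simp only [cartanMatrix_addLeaf_mulVec_some, Function.comp_def, Option.elim_some,
      Option.elim_none, cartanMatrix_AGraph_mulVec_trapezoid, Pi.add_apply, Pi.single_apply,
      Option.some.injEq]
    split_ifs <;> ring

/-- This is `1 / p + 1 / q + 1 / r > 1` for the numbers `p, q, r = 2, k + 1, n - k` of vertices of
the three legs. -/
theorem posDef_cartanMatrix_branchedPath_iff {n : ℕ} (k : Fin n) :
    (cartanMatrix (branchedPath n k)).PosDef ↔ 2⁻¹ < (k + 1 : ℝ)⁻¹ + (n - k : ℝ)⁻¹ := by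
  have hC := cartanMatrix_branchedPath_mulVec k
  have hx : ∀ o : Option (Fin n), 0 < o.elim (2⁻¹) fun i => trapezoid n k k i := by
    rintro (_ | i)
    exacts [inv_pos.2 two_pos, trapezoid_pos (by omega) le_rfl (by omega) (by omega)]
  constructor
  · contrapose!
    intro hle
    refine not_posDef_of_mulVec_nonpos (fun o => (hx o).le)
      (fun h => (hx none).ne' (congrFun h none)) ?_
    rw [hC, Pi.single_nonpos]
    linarith
  · intro hlt
    refine posDef_cartanMatrix_of_superharmonic
      (addLeaf.connected (AGraph.connected k.pos)) hx ?_ ?_ <;> rw [hC]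
    · exact Pi.single_nonneg.2 (by linarith)
    · exact Pi.single_ne_zero_iff.2 (by linarith)

theorem posDef_cartanMatrix_AGraph {n : ℕ} (hn : 1 ≤ n) : (cartanMatrix (AGraph n)).PosDef := by
  refine posDef_cartanMatrix_of_embedding (addLeaf.embedding (w := ⟨0, hn⟩))
    ((posDef_cartanMatrix_branchedPath_iff _).2 ?_)
  have : (0 : ℝ) < (n : ℝ)⁻¹ := by positivity
  simp only [Nat.cast_zero, zero_add, inv_one, sub_zero]
  linarith

theorem not_posDef_cartanMatrix_addLeaf_branchedPath_some_of_le {n : ℕ} {a b : Fin n}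
    (ha : 1 ≤ (a : ℕ)) (hab : a ≤ b) (hb : (b : ℕ) + 2 ≤ n) :
    ¬ (cartanMatrix (addLeaf (branchedPath n a) (some b))).PosDef := by
  have ha' : (a + 1 : ℝ)⁻¹ ≤ 2⁻¹ := by
    gcongr
    exact_mod_cast (by omega)
  have hb' : (n - b : ℝ)⁻¹ ≤ 2⁻¹ := by
    gcongr
    exact le_sub_iff_add_le'.2 (by exact_mod_cast hb)
  -- In the extremal case `a = 1`, `b = n - 2` this spans the kernel for the extended diagram `D̃`.
  refine not_posDef_of_mulVec_nonpos
    (x := fun o => o.elim (2⁻¹) fun o => o.elim (2⁻¹) fun i => trapezoid n a b i) ?_ ?_ ?_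
  · rintro (_ | _ | i)
    exacts [inv_nonneg.2 zero_le_two, inv_nonneg.2 zero_le_two,
      (trapezoid_pos (by omega) (by exact_mod_cast hab) (by omega) (by omega)).le]
  · exact fun h => inv_ne_zero two_ne_zero (congrFun h none)
  · rintro (_ | _ | i)
    · simp [cartanMatrix_addLeaf_mulVec_none, trapezoid_of_mem_Icc, hab]
    · simp [cartanMatrix_addLeaf_mulVec_some, cartanMatrix_addLeaf_mulVec_none,
        trapezoid_of_mem_Icc, hab]
    · simp only [cartanMatrix_addLeaf_mulVec_some, Function.comp_def, Option.elim_some,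
        Option.elim_none, cartanMatrix_AGraph_mulVec_trapezoid, Pi.add_apply, Pi.single_apply,
        Option.some.injEq, Pi.zero_apply]
      split_ifs <;> linarith

theorem not_posDef_cartanMatrix_addLeaf_branchedPath_none {n : ℕ} {k : Fin n} (hk : 2 ≤ (k : ℕ))
    (hkn : (k : ℕ) + 3 ≤ n) : ¬ (cartanMatrix (addLeaf (branchedPath n k) none)).PosDef := by
  have hk' : (k + 1 : ℝ)⁻¹ ≤ 3⁻¹ := by
    gcongr
    exact_mod_cast (by omega)
  have hkn' : (n - k : ℝ)⁻¹ ≤ 3⁻¹ := by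
    gcongr
    exact le_sub_iff_add_le'.2 (by exact_mod_cast hkn)
  -- In the extremal case `k = 2`, `n = 5` this spans the kernel for the extended diagram `Ẽ₆`.
  refine not_posDef_of_mulVec_nonpos
    (x := fun o => o.elim (3⁻¹) fun o => o.elim (2 / 3) fun i => trapezoid n k k i) ?_ ?_ ?_
  · rintro (_ | _ | i)
    exacts [by norm_num, by norm_num, (trapezoid_pos (by omega) le_rfl (by omega) (by omega)).le]
  · exact fun h => by simpa using congrFun h none
  · rintro (_ | _ | i)
    · norm_num [cartanMatrix_addLeaf_mulVec_none]
    · norm_num [cartanMatrix_addLeaf_mulVec_some, cartanMatrix_addLeaf_mulVec_none,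
        trapezoid_of_mem_Icc]
    · simp only [cartanMatrix_addLeaf_mulVec_some, Function.comp_def, Option.elim_some,
        Option.elim_none, cartanMatrix_AGraph_mulVec_trapezoid, Pi.add_apply, Pi.single_apply,
        reduceCtorEq, if_false, Pi.zero_apply]
      split_ifs <;> linarith

/-! ### Classification -/

namespace branchedPath

def isoFromRel {n : ℕ} (k : Fin n) :
    branchedPath n k ≃g SimpleGraph.fromRel fun i j : Fin (n + 1) =>
      ((i : ℕ) + 1 = (j : ℕ) ∧ (j : ℕ) ≤ n - 1) ∨ ((i : ℕ) = k ∧ (j : ℕ) = n) :=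
  addLeaf.iso finSuccEquivLast.symm
    (fun i j => by
      simp only [finSuccEquivLast_symm_some, SimpleGraph.fromRel_adj, AGraph.adj_iff, ne_eq,
        Fin.ext_iff, Fin.val_castSucc]
      omega)
    fun i => by
      simp only [finSuccEquivLast_symm_some, finSuccEquivLast_symm_none, SimpleGraph.fromRel_adj,
        ne_eq, Fin.ext_iff, Fin.val_castSucc, Fin.val_last, and_true]
      omega

def isoDGraph {n : ℕ} (hn : 1 < n) : branchedPath n ⟨1, hn⟩ ≃g DGraph (n + 1) :=
  isoFromRel ⟨1, hn⟩

def isoE6Graph : branchedPath 5 2 ≃g E6Graph := isoFromRel 2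

def isoE7Graph : branchedPath 6 2 ≃g E7Graph := isoFromRel 2

def isoE8Graph : branchedPath 7 2 ≃g E8Graph := isoFromRel 2

end branchedPath

theorem not_posDef_cartanMatrix_addLeaf_branchedPath_some {n : ℕ} {a b : Fin n}
    (ha : 1 ≤ (a : ℕ)) (han : (a : ℕ) + 2 ≤ n) (hb : 1 ≤ (b : ℕ)) (hbn : (b : ℕ) + 2 ≤ n) :
    ¬ (cartanMatrix (addLeaf (branchedPath n a) (some b))).PosDef := by
  rcases le_total a b with hab | hba
  · exact not_posDef_cartanMatrix_addLeaf_branchedPath_some_of_le ha hab hbn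
  · exact mt (posDef_cartanMatrix_of_embedding (addLeaf.swap (AGraph n) b a).toEmbedding)
      (not_posDef_cartanMatrix_addLeaf_branchedPath_some_of_le hb hba han)

/-- A nonempty path, or a branched path normalised by reversal so that its leg through vertex `0`
is not longer than the opposite one. Among trees, this class is closed under attaching a leaf as
long as the Cartan matrix stays positive definite. -/
def IsPathOrBranchedPath {V : Type*} (G : SimpleGraph V) : Prop :=
  (∃ n, 1 ≤ n ∧ Nonempty (G ≃g AGraph n)) ∨
    ∃ (n : ℕ) (k : Fin n), 1 ≤ (k : ℕ) ∧ 2 * (k : ℕ) + 1 ≤ n ∧ Nonempty (G ≃g branchedPath n k)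

theorem IsPathOrBranchedPath.of_iso {V W : Type*} {G : SimpleGraph V} {H : SimpleGraph W}
    (e : G ≃g H) : IsPathOrBranchedPath H → IsPathOrBranchedPath G
  | .inl ⟨n, hn, ⟨f⟩⟩ => .inl ⟨n, hn, ⟨e.trans f⟩⟩
  | .inr ⟨n, k, hk, hkn, ⟨f⟩⟩ => .inr ⟨n, k, hk, hkn, ⟨e.trans f⟩⟩

theorem isPathOrBranchedPath_branchedPath {n : ℕ} (k : Fin n) :
    IsPathOrBranchedPath (branchedPath n k) := by
  obtain hfirst | hlast | ⟨hk, hkn⟩ :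
      (k : ℕ) = 0 ∨ (k : ℕ) + 1 = n ∨ 1 ≤ (k : ℕ) ∧ (k : ℕ) + 2 ≤ n := by omega
  · exact .inl ⟨n + 1, by omega, ⟨AGraph.addLeafFirst hfirst⟩⟩
  · exact .inl ⟨n + 1, by omega, ⟨AGraph.addLeafLast hlast⟩⟩
  · rcases le_total (2 * (k : ℕ) + 1) n with hle | hge
    · exact .inr ⟨n, k, hk, hle, ⟨.refl⟩⟩
    · refine .inr ⟨n, k.rev, ?_, ?_, ⟨addLeaf.congr (AGraph.rev n) rfl⟩⟩ <;>
        rw [Fin.val_rev] <;> omega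

theorem isPathOrBranchedPath_addLeaf_branchedPath_end {n : ℕ} {k b : Fin n}
    (hb : (b : ℕ) = 0 ∨ (b : ℕ) + 1 = n) :
    IsPathOrBranchedPath (addLeaf (branchedPath n k) (some b)) := by
  refine .of_iso (addLeaf.swap (AGraph n) k b) ?_
  rcases hb with hfirst | hlast
  · exact .of_iso (addLeaf.congr (AGraph.addLeafFirst hfirst) rfl)
      (isPathOrBranchedPath_branchedPath _)
  · exact .of_iso (addLeaf.congr (AGraph.addLeafLast hlast) rfl)
      (isPathOrBranchedPath_branchedPath _)

def branchedPath.swapShortLegs {n : ℕ} {k z : Fin n} (hk : (k : ℕ) = 1) (hz : (z : ℕ) = 0) :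
    branchedPath n k ≃g branchedPath n k :=
  twinSwapIso (a := none) (b := some z) <| by
    rintro (_ | i)
    · simp [Fin.ext_iff, hk, hz]
    · simp [Fin.ext_iff, hk, hz, eq_comm]

theorem isPathOrBranchedPath_addLeaf_branchedPath {n : ℕ} {k : Fin n} (hk : 1 ≤ (k : ℕ))
    (hkn : 2 * (k : ℕ) + 1 ≤ n) {w : Option (Fin n)}
    (hC : (cartanMatrix (addLeaf (branchedPath n k) w)).PosDef) :
    IsPathOrBranchedPath (addLeaf (branchedPath n k) w) := by
  obtain _ | b := w
  · obtain hk1 | hk2 := hk.eq_or_lt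
    · let z : Fin n := ⟨0, k.pos⟩
      exact .of_iso (addLeaf.congr (branchedPath.swapShortLegs (z := z) hk1.symm rfl)
        (Equiv.swap_apply_left none (some z)))
        (isPathOrBranchedPath_addLeaf_branchedPath_end (b := z) (.inl rfl))
    · exact absurd hC (not_posDef_cartanMatrix_addLeaf_branchedPath_none hk2 (by omega))
  · by_cases hb : (b : ℕ) = 0 ∨ (b : ℕ) + 1 = n
    · exact isPathOrBranchedPath_addLeaf_branchedPath_end hb
    · exact absurd hC (not_posDef_cartanMatrix_addLeaf_branchedPath_some hk (by omega) (by omega)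
        (by omega))

theorem isPathOrBranchedPath_addLeaf {V : Type*} [DecidableEq V] {H : SimpleGraph V}
    [DecidableRel H.Adj] (hH : IsPathOrBranchedPath H) {w : V}
    (hC : (cartanMatrix (addLeaf H w)).PosDef) : IsPathOrBranchedPath (addLeaf H w) := by
  obtain ⟨n, -, ⟨e⟩⟩ | ⟨n, k, hk, hkn, ⟨e⟩⟩ := hH
  · exact .of_iso (addLeaf.congr e rfl) (isPathOrBranchedPath_branchedPath (e w))
  · have e' : addLeaf H w ≃g addLeaf (branchedPath n k) (e w) := addLeaf.congr e rfl
    exact .of_iso e' (isPathOrBranchedPath_addLeaf_branchedPath hk hkn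
      (posDef_cartanMatrix_of_embedding e'.symm.toEmbedding hC))

theorem exists_iso_addLeaf_of_isTree {V : Type*} [Finite V] [Nontrivial V] {G : SimpleGraph V}
    (hT : G.IsTree) : ∃ (u : V) (w : ({u}ᶜ : Set V)), (G.induce {u}ᶜ).IsTree ∧
      Nonempty (addLeaf (G.induce {u}ᶜ) w ≃g G) := by
  classical
  have := Fintype.ofFinite V
  obtain ⟨u, hu⟩ := hT.exists_vert_degree_one_of_nontrivial
  obtain ⟨w, huw, hw⟩ := SimpleGraph.degree_eq_one_iff_existsUnique_adj.1 hu
  refine ⟨u, ⟨w, huw.ne'⟩, ⟨?_, ?_⟩, ⟨addLeaf.iso (Equiv.optionSubtypeNe u) ?_ ?_⟩⟩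
  · exact hT.connected.induce_compl_singleton_of_degree_eq_one hu
  · exact hT.isAcyclic.induce _
  · exact fun _ _ => Iff.rfl
  · exact fun v => ⟨fun huv => Subtype.ext (hw v huv), fun hvw => hvw ▸ huw⟩

theorem isPathOrBranchedPath_of_posDef_cartanMatrix {V : Type*} [Finite V] [DecidableEq V]
    {G : SimpleGraph V} [DecidableRel G.Adj] (hT : G.IsTree) (hC : (cartanMatrix G).PosDef) :
    IsPathOrBranchedPath G := by
  classical
  induction hn : Nat.card V using Nat.strong_induction_on generalizing V with
  | _ n ih
  rcases subsingleton_or_nontrivial V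
  · have := hT.connected.nonempty
    have := uniqueOfSubsingleton (Classical.arbitrary V)
    exact .inl ⟨1, le_rfl, ⟨⟨.ofUnique V (Fin 1), fun {v w} => by simp [Subsingleton.elim v w]⟩⟩⟩
  · obtain ⟨u, w, hT', ⟨e⟩⟩ := exists_iso_addLeaf_of_isTree hT
    have hcard : Nat.card ({u}ᶜ : Set V) < n := hn ▸ Finite.card_subtype_lt (x := u) (by simp)
    have hC' := posDef_cartanMatrix_of_embedding e.toEmbedding hC
    exact .of_iso e.symm (isPathOrBranchedPath_addLeaf
      (ih _ hcard hT' (posDef_cartanMatrix_of_embedding addLeaf.embedding hC') rfl) hC')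

theorem eq_one_or_eq_two_of_half_lt_inv_add_inv {n k : ℕ} (hk : 1 ≤ k) (hkn : 2 * k + 1 ≤ n)
    (h : 2⁻¹ < (k + 1 : ℝ)⁻¹ + (n - k : ℝ)⁻¹) : k = 1 ∨ k = 2 ∧ n ≤ 7 := by
  have hkn' : (2 * k + 1 : ℝ) ≤ n := by exact_mod_cast hkn
  have hlegs : (n - k : ℝ)⁻¹ ≤ (k + 1 : ℝ)⁻¹ := by
    gcongr
    linarith
  have hk3 : (k : ℝ) < 3 := by
    have : (4 : ℝ)⁻¹ < (k + 1 : ℝ)⁻¹ := by linarith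
    linarith [(inv_lt_inv₀ (by positivity) (by positivity)).1 this]
  have hk3' : k < 3 := by exact_mod_cast hk3
  obtain rfl | rfl : k = 1 ∨ k = 2 := by omega
  · exact .inl rfl
  · have : (6 : ℝ)⁻¹ < (n - 2 : ℝ)⁻¹ := by push_cast at h; linarith
    have hn : (n : ℝ) < 8 := by
      linarith [(inv_lt_inv₀ (by positivity) (by push_cast at hkn'; linarith)).1 this]
    have hn' : n < 8 := by exact_mod_cast hn
    exact .inr ⟨rfl, by omega⟩

/-- The graph is one of the simply laced Dynkin diagrams `Aₙ`, `Dₙ`, `E₆`, `E₇`, `E₈`. -/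
def IsDynkin {V : Type*} (G : SimpleGraph V) : Prop :=
  (∃ n, 1 ≤ n ∧ Nonempty (G ≃g AGraph n)) ∨
    (∃ n, 4 ≤ n ∧ Nonempty (G ≃g DGraph n)) ∨
    Nonempty (G ≃g E6Graph) ∨ Nonempty (G ≃g E7Graph) ∨ Nonempty (G ≃g E8Graph)

section Classification

variable {V : Type*} [DecidableEq V] {G : SimpleGraph V} [DecidableRel G.Adj]

theorem isDynkin_of_posDef_cartanMatrix [Finite V] (hT : G.IsTree) (hC : (cartanMatrix G).PosDef) :
    IsDynkin G := by
  obtain hpath | ⟨n, ⟨k, hkn⟩, hk, (hkn' : 2 * k + 1 ≤ n), ⟨e⟩⟩ :=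
    isPathOrBranchedPath_of_posDef_cartanMatrix hT hC
  · exact .inl hpath
  have hlegs := (posDef_cartanMatrix_branchedPath_iff _).1
    (posDef_cartanMatrix_of_embedding e.symm.toEmbedding hC)
  obtain rfl | ⟨rfl, hn⟩ := eq_one_or_eq_two_of_half_lt_inv_add_inv hk hkn' hlegs
  · exact .inr (.inl ⟨n + 1, by omega, ⟨e.trans (branchedPath.isoDGraph hkn)⟩⟩)
  obtain rfl | rfl | rfl : n = 5 ∨ n = 6 ∨ n = 7 := by omega
  · exact .inr (.inr (.inl ⟨e.trans branchedPath.isoE6Graph⟩))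
  · exact .inr (.inr (.inr (.inl ⟨e.trans branchedPath.isoE7Graph⟩)))
  · exact .inr (.inr (.inr (.inr ⟨e.trans branchedPath.isoE8Graph⟩)))

theorem IsDynkin.posDef_cartanMatrix (hG : IsDynkin G) : (cartanMatrix G).PosDef := by
  have of_branchedPath {n : ℕ} {k : Fin n} (e : G ≃g branchedPath n k)
      (hlegs : 2⁻¹ < (k + 1 : ℝ)⁻¹ + (n - k : ℝ)⁻¹) : (cartanMatrix G).PosDef :=
    posDef_cartanMatrix_of_embedding e.toEmbedding
      ((posDef_cartanMatrix_branchedPath_iff k).2 hlegs)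
  obtain ⟨n, hn, ⟨e⟩⟩ | ⟨_ | n, hn, ⟨e⟩⟩ | ⟨⟨e⟩⟩ | ⟨⟨e⟩⟩ | ⟨⟨e⟩⟩ := hG
  · exact posDef_cartanMatrix_of_embedding e.toEmbedding (posDef_cartanMatrix_AGraph hn)
  · omega
  · refine of_branchedPath (e.trans (branchedPath.isoDGraph (by omega)).symm) ?_
    have hn' : (3 : ℝ) ≤ n := by exact_mod_cast (by omega)
    have : (0 : ℝ) < (n - 1 : ℝ)⁻¹ := inv_pos.2 (by linarith)
    norm_num [this]
  · exact of_branchedPath (e.trans branchedPath.isoE6Graph.symm) (by norm_num)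
  · exact of_branchedPath (e.trans branchedPath.isoE7Graph.symm) (by norm_num)
  · exact of_branchedPath (e.trans branchedPath.isoE8Graph.symm) (by norm_num)

end Classification

/-- A finite tree has index r < 2 iff it is isomorphic to one of the Dynkin
diagrams Aₙ (n ≥ 1), Dₙ (n ≥ 4), E₆, E₇, E₈. -/
theorem stmt16 {V : Type*} [Fintype V] (G : SimpleGraph V) [DecidableRel G.Adj]
    (hT : G.IsTree)
    (r : ℝ)
    (hr : IsEigen (G.adjMatrix ℝ) r ∧ ∀ μ, IsEigen (G.adjMatrix ℝ) μ → μ ≤ r) :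
    r < 2 ↔
      (∃ n, 1 ≤ n ∧ Nonempty (G ≃g AGraph n)) ∨
      (∃ n, 4 ≤ n ∧ Nonempty (G ≃g DGraph n)) ∨
      Nonempty (G ≃g E6Graph) ∨ Nonempty (G ≃g E7Graph) ∨ Nonempty (G ≃g E8Graph) := by
  classical
  rw [← posDef_cartanMatrix_iff_lt_two hr]
  exact ⟨isDynkin_of_posDef_cartanMatrix hT, IsDynkin.posDef_cartanMatrix⟩
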